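/- Let I ⊆ N = {1,…,n} and let h : 𝖱 → 𝖱^n be continuous such that π_i∘h is unbounded for each i ∈ I and bounded for each i ∉ I, where π_i is the i-th coordinate projection. If U ⊆ 𝖱^n is an open set containing the image of h, then there exist x ∈ 𝖱 and, for each j ∈ N∖I, elements y_j < y_j' of 𝖱, such that U contains the product ∏_{i=1}^n U_i, where U_i = [x, ω₁) for i ∈ I and U_j = (y_j, y_j') for j ∉ I. -/

import Mathlib

noncomputable section
open Set

/-- The first uncountable ordinal `ω₁`. -/
def Omega1 : Ordinal := Ordinal.omega 1

/-- The closed long ray `𝖱`: `ω₁ × [0,1)` with the lexicographic order. -/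
def LongRay : Type 1 := {o : Ordinal // o < Omega1} ×ₗ (Set.Ico (0:ℝ) 1)

instance : LinearOrder LongRay :=
  inferInstanceAs (LinearOrder ({o : Ordinal // o < Omega1} ×ₗ (Set.Ico (0:ℝ) 1)))

/-- `𝖱` carries the order topology. -/
instance : TopologicalSpace LongRay := Preorder.topology LongRay
instance : OrderTopology LongRay := ⟨rfl⟩

lemma omega1_pos : (0 : Ordinal) < Omega1 := Ordinal.omega_pos 1

/-- The point `0 = (0,0)` of the long ray. -/
def rayZero : LongRay := toLex (⟨0, omega1_pos⟩, ⟨0, by simp⟩)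

/-- Identification of the countable ordinal `o` with the point `(o,0)` of the long ray
(junk value for `o ≥ ω₁`). -/
def ordR (o : Ordinal) : LongRay :=
  if h : o < Omega1 then toLex (⟨o, h⟩, ⟨0, by simp⟩) else rayZero

/-- The `I`-diagonal at height `c` (only the values of `c` off `I` are relevant). -/
def Delta (n : ℕ) (I : Finset (Fin n)) (c : Fin n → LongRay) : Set (Fin n → LongRay) :=
  {x | (∀ i ∈ I, ∀ i' ∈ I, x i = x i') ∧ ∀ j ∉ I, x j = c j}

/-- `f` is `I`-cofinal if `f` restricted to `Δ_I = Δ_I(0)` is unbounded. -/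
def ICofinal (n : ℕ) (f : (Fin n → LongRay) → LongRay) (I : Finset (Fin n)) : Prop :=
  ¬ BddAbove (f '' Delta n I (fun _ => rayZero))

/-- The cofinality class `𝔠(f) = {I : f is I-cofinal}`. -/
def cofClass (n : ℕ) (f : (Fin n → LongRay) → LongRay) : Set (Finset (Fin n)) :=
  {I | ICofinal n f I}

/-- `M_I(c) = {x : x_i ≥ c for all i ∈ I}`. -/
def MSet (n : ℕ) (I : Finset (Fin n)) (c : LongRay) : Set (Fin n → LongRay) :=
  {x | ∀ i ∈ I, c ≤ x i}

/-- `E_I(b,d) = {x ∈ M_I(d) : x_j = b_j for all j ∉ I}`. -/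
def ESet (n : ℕ) (I : Finset (Fin n)) (b : Fin n → LongRay) (d : LongRay) :
    Set (Fin n → LongRay) :=
  {x | (∀ i ∈ I, d ≤ x i) ∧ ∀ j ∉ I, x j = b j}

namespace LongRay

/-- The ordinal coordinate of a point. -/
def ordinal (p : LongRay) : {o : Ordinal // o < Omega1} := (ofLex p).1

/-- The real coordinate of a point. -/
def real (p : LongRay) : Set.Ico (0 : ℝ) 1 := (ofLex p).2

/-- The point with given coordinates. -/
def mk (α : {o : Ordinal // o < Omega1}) (r : Set.Ico (0 : ℝ) 1) : LongRay := toLex (α, r)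

lemma lt_def {p q : LongRay} :
    p < q ↔ p.ordinal < q.ordinal ∨ p.ordinal = q.ordinal ∧ p.real < q.real :=
  Prod.Lex.lt_iff (x := p) (y := q)

lemma ordinal_mono {p q : LongRay} (hpq : p ≤ q) : p.ordinal ≤ q.ordinal := by
  by_contra! hlt
  exact (lt_def.2 (Or.inl hlt)).not_ge hpq

lemma exists_gt_of_countable_ordinals {S : Set {o : Ordinal // o < Omega1}} (hS : S.Countable) :
    ∃ α : {o : Ordinal // o < Omega1}, ∀ s ∈ S, s < α := by
  have := hS.to_subtype
  have hlim : Order.IsSuccLimit Omega1 := Cardinal.isSuccLimit_omega 1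
  have hsup : ⨆ s : S, Order.succ s.1.1 < Omega1 :=
    Ordinal.iSup_lt_omega_one fun s => hlim.succ_lt s.1.2
  refine ⟨⟨_, hsup⟩, fun s hs => Subtype.coe_lt_coe.1 ?_⟩
  exact (Order.lt_succ s.1).trans_le (Ordinal.le_iSup (fun s : S => Order.succ s.1.1) ⟨s, hs⟩)

lemma countable_Iic_ordinal (α : {o : Ordinal // o < Omega1}) : (Set.Iic α).Countable := by
  have hcard : (Order.succ α.1).card < Cardinal.aleph 1 := by
    rw [← Cardinal.lt_ord, Cardinal.ord_aleph]
    exact (Cardinal.isSuccLimit_omega 1).succ_lt α.2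
  have hIio : (Set.Iio (Order.succ α.1)).Countable := by
    rw [← Cardinal.le_aleph0_iff_set_countable, Cardinal.mk_Iio_ordinal,
      Cardinal.lift_le_aleph0, ← Order.lt_succ_iff, Cardinal.succ_aleph0]
    exact hcard
  refine (hIio.preimage Subtype.val_injective).mono fun β hβ => ?_
  exact Order.lt_succ_iff.2 (show β.1 ≤ α.1 from hβ)

lemma lt_mk_zero {p : LongRay} {α} : p < mk α ⟨0, by simp⟩ ↔ p.ordinal < α := by
  rw [lt_def]
  exact or_iff_left fun h => absurd h.2 (not_lt.2 p.real.2.1)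

lemma exists_gt_of_countable {S : Set LongRay} (hS : S.Countable) :
    ∃ α, ∀ s ∈ S, s < mk α ⟨0, by simp⟩ := by
  obtain ⟨α, hα⟩ := exists_gt_of_countable_ordinals (hS.image ordinal)
  exact ⟨α, fun s hs => lt_mk_zero.2 (hα _ ⟨s, hs, rfl⟩)⟩

instance : Nonempty LongRay := ⟨rayZero⟩

instance : NoMaxOrder LongRay where
  exists_gt p := by
    obtain ⟨α, hα⟩ := exists_gt_of_countable (Set.countable_singleton p)
    exact ⟨_, hα p rfl⟩

/-- Every proper initial segment of the long ray is order-separable. -/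
lemma exists_countable_dense_below (b : LongRay) :
    ∃ D : Set LongRay, D.Countable ∧ ∀ p q, p < b → p < q → ∃ d ∈ D, p < d ∧ d < q := by
  have hrat : {r : Set.Ico (0 : ℝ) 1 | ∃ a : ℚ, (a : ℝ) = r}.Countable :=
    (Set.countable_range ((↑) : ℚ → ℝ)).preimage Subtype.val_injective
  refine ⟨_, ((countable_Iic_ordinal b.ordinal).prod hrat).image fun d => mk d.1 d.2, ?_⟩
  intro p q hpb hpq
  have hpo : p.ordinal ≤ b.ordinal := ordinal_mono hpb.le
  have key (u : ℝ) (hu : u ≤ 1) (hpu : (p.real : ℝ) < u)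
      (hq : ∀ r : Set.Ico (0 : ℝ) 1, r.1 < u → mk p.ordinal r < q) :
      ∃ d ∈ (fun d => mk d.1 d.2) '' (Set.Iic b.ordinal ×ˢ
        {r : Set.Ico (0 : ℝ) 1 | ∃ a : ℚ, (a : ℝ) = r}), p < d ∧ d < q := by
    obtain ⟨a, ha, hau⟩ := exists_rat_btwn hpu
    let r : Set.Ico (0 : ℝ) 1 := ⟨a, p.real.2.1.trans ha.le, hau.trans_le hu⟩
    exact ⟨mk p.ordinal r, ⟨(p.ordinal, r), ⟨hpo, a, rfl⟩, rfl⟩,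
      lt_def.2 (Or.inr ⟨rfl, ha⟩), hq r hau⟩
  rcases lt_def.1 hpq with hlt | ⟨heq, hlt⟩
  · exact key 1 le_rfl p.real.2.2 fun r _ => lt_def.2 (Or.inl hlt)
  · exact key q.real q.real.2.2.le hlt fun r hr => lt_def.2 (Or.inr ⟨heq, hr⟩)

/-- Points of the long ray are limits of sequences from the right. -/
lemma exists_seq_right (c : LongRay) :
    ∃ u : ℕ → LongRay, (∀ k, c < u k) ∧
      ∀ w : ℕ → LongRay, (∀ k, w k ∈ Set.Ioo c (u k)) →
        Filter.Tendsto w Filter.atTop (nhds c) := by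
  obtain ⟨v, hv, hvc, hlim⟩ := exists_seq_strictAnti_tendsto' c.real.2.2
  let u (k : ℕ) : LongRay := mk c.ordinal ⟨v k, c.real.2.1.trans (hvc k).1.le, (hvc k).2⟩
  refine ⟨u, fun k => lt_def.2 (Or.inr ⟨rfl, (hvc k).1⟩), fun w hw => tendsto_order.2
    ⟨fun a ha => Filter.Eventually.of_forall fun k => ha.trans (hw k).1, fun a ha => ?_⟩⟩
  have hua : ∀ᶠ k in Filter.atTop, u k < a := by
    rcases lt_def.1 ha with hlt | ⟨heq, hlt⟩
    · exact Filter.Eventually.of_forall fun k => lt_def.2 (Or.inl hlt)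
    · filter_upwards [hlim.eventually_lt_const (show (c.real : ℝ) < a.real from hlt)] with k hk
      exact lt_def.2 (Or.inr ⟨heq, hk⟩)
  filter_upwards [hua] with k hk
  exact (hw k).2.trans hk

/-- Iterating a function on the long ray converges along interleaved sequences. -/
lemma exists_interleaving (b : LongRay) (g : LongRay → LongRay) :
    ∃ t, ∃ x : ℕ → LongRay, b ≤ t ∧ (∀ m, x m < t) ∧ (∀ m, g (x m) ≤ x (m + 1)) ∧
      ∀ w : ℕ → LongRay, (∀ m, x m ≤ w m ∧ w m ≤ x (m + 1)) →
        Filter.Tendsto w Filter.atTop (nhds t) := by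
  have hstep (p : LongRay) : ∃ α, p < mk α ⟨0, by simp⟩ ∧ g p < mk α ⟨0, by simp⟩ := by
    obtain ⟨α, hα⟩ := exists_gt_of_countable (S := {p, g p}) (by simp)
    exact ⟨α, hα _ (by simp), hα _ (by simp)⟩
  choose G hG hG' using hstep
  let x : ℕ → LongRay := fun m => (fun p => mk (G p) ⟨0, by simp⟩)^[m] b
  have hx (m) : x (m + 1) = mk (G (x m)) ⟨0, by simp⟩ := Function.iterate_succ_apply' _ _ _
  have hne : {α | ∀ m, (x m).ordinal < α}.Nonempty := by
    obtain ⟨α, hα⟩ := exists_gt_of_countable_ordinals (Set.countable_range fun m => (x m).ordinal)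
    exact ⟨α, fun m => hα _ ⟨m, rfl⟩⟩
  obtain ⟨τ, hτ, hmin⟩ := WellFounded.has_min wellFounded_lt _ hne
  have hlt (m) : x m < mk τ ⟨0, by simp⟩ := lt_mk_zero.2 (hτ m)
  refine ⟨mk τ ⟨0, by simp⟩, x, (hlt 0).le, hlt, fun m => hx m ▸ (hG' (x m)).le, fun w hw => ?_⟩
  have hmono : StrictMono x := strictMono_nat_of_lt_succ fun m => hx m ▸ hG (x m)
  refine tendsto_order.2 ⟨fun a ha => ?_, fun a ha =>
    Filter.Eventually.of_forall fun m => ((hw m).2.trans_lt (hlt _)).trans ha⟩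
  obtain ⟨m, hm⟩ : ∃ m, a.ordinal ≤ (x m).ordinal := by
    by_contra! hcon
    exact hmin _ hcon (lt_mk_zero.1 ha)
  have ham : a < x (m + 1) := by
    rw [hx, lt_mk_zero]
    exact hm.trans_lt (lt_mk_zero.1 (hG _))
  filter_upwards [Filter.eventually_ge_atTop (m + 1)] with k hk
  exact ham.trans_le ((hmono.monotone hk).trans (hw k).1)

/-- A bounded continuous function on the long ray is eventually constant. -/
lemma eventually_const {f : LongRay → LongRay} (hf : Continuous f)
    (hb : BddAbove (Set.range f)) : ∃ c x, ∀ s, x ≤ s → f s = c := by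
  obtain ⟨b, hb⟩ := hb
  obtain ⟨b', hbb'⟩ := exists_gt b
  obtain ⟨D, hD, hDd⟩ := exists_countable_dense_below b'
  have hsep (p q : LongRay) (hpq : p < q) :
      ∃ x, (∀ s, x ≤ s → p < f s) ∨ (∀ s, x ≤ s → f s < q) := by
    by_contra! hcon
    choose hlow hupp using hcon
    choose s hs hsp using hlow
    choose s' hs' hsq using hupp
    obtain ⟨t, x, -, -, hx, hw⟩ := exists_interleaving rayZero fun y => max (s y) (s' y)
    have h1 := (hf.tendsto t).comp (hw (fun m => s (x m))
      fun m => ⟨hs _, (le_max_left _ _).trans (hx m)⟩)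
    have h2 := (hf.tendsto t).comp (hw (fun m => s' (x m))
      fun m => ⟨hs' _, (le_max_right _ _).trans (hx m)⟩)
    exact ((ge_of_tendsto' h2 fun m => hsq _).trans (le_of_tendsto' h1 fun m => hsp _)).not_gt hpq
  choose! X hX using hsep
  obtain ⟨α, hα⟩ := exists_gt_of_countable ((hD.prod hD).image fun d => X d.1 d.2)
  have hle (s s' : LongRay) (hs : mk α ⟨0, by simp⟩ ≤ s) (hs' : mk α ⟨0, by simp⟩ ≤ s') :
      f s ≤ f s' := by
    by_contra! hlt
    have hb' (r) : f r < b' := (hb ⟨r, rfl⟩).trans_lt hbb'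
    obtain ⟨q, hq, hq1, hq2⟩ := hDd _ _ (hb' s') hlt
    obtain ⟨p, hp, hp1, hp2⟩ := hDd _ _ (hb' s') hq1
    have hXα := (hα _ ⟨(p, q), ⟨hp, hq⟩, rfl⟩).le
    rcases hX p q hp2 with h | h
    · exact (h s' (hXα.trans hs')).not_gt hp1
    · exact (h s (hXα.trans hs)).not_gt hq2
  exact ⟨f (mk α ⟨0, by simp⟩), _, fun s hs => le_antisymm (hle _ _ hs le_rfl) (hle _ _ le_rfl hs)⟩

/-- A continuous unbounded function on the long ray takes large values at large points. -/
lemma exists_ge_of_unbounded {f : LongRay → LongRay} (hf : Continuous f)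
    (hb : ¬ BddAbove (Set.range f)) (x : LongRay) : ∃ s, x ≤ s ∧ x ≤ f s := by
  obtain ⟨D, hD, hDd⟩ := exists_countable_dense_below x
  obtain ⟨α, hα⟩ := exists_gt_of_countable (hD.image f)
  obtain ⟨_, ⟨s, rfl⟩, hs⟩ := not_bddAbove_iff.1 hb (max x (mk α ⟨0, by simp⟩))
  refine ⟨s, ?_, (le_max_left _ _).trans hs.le⟩
  by_contra! hsx
  have hopen : IsOpen (f ⁻¹' Set.Ioi (mk α ⟨0, by simp⟩)) := isOpen_Ioi.preimage hf
  obtain ⟨u, hu, hsub⟩ := exists_Ico_subset_of_mem_nhds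
    (hopen.mem_nhds ((le_max_right _ _).trans_lt hs)) (exists_gt s)
  obtain ⟨d, hd, hd1, hd2⟩ := hDd s u hsx hu
  exact (hα _ ⟨d, hd, rfl⟩).not_gt (hsub ⟨hd1.le, hd2⟩)

end LongRay

/-- structure of open sets containing the image of a curve which is
cofinal exactly in the coordinates of `I`. -/
theorem structure_of_open_sets (n : ℕ) (I : Finset (Fin n)) (h : LongRay → (Fin n → LongRay))
    (hcont : Continuous h)
    (hcof : ∀ i ∈ I, ¬ BddAbove (Set.range (fun t => h t i)))
    (hbd : ∀ i ∉ I, BddAbove (Set.range (fun t => h t i)))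
    (U : Set (Fin n → LongRay)) (hU : IsOpen U) (him : Set.range h ⊆ U) :
    ∃ x : LongRay, ∃ y y' : Fin n → LongRay, (∀ j ∉ I, y j < y' j) ∧
      {z : Fin n → LongRay | (∀ i ∈ I, x ≤ z i) ∧ ∀ j ∉ I, z j ∈ Set.Ioo (y j) (y' j)} ⊆ U := by
  have hs (x : LongRay) (i : Fin n) : ∃ s, i ∈ I → x ≤ s ∧ x ≤ h s i := by
    by_cases hi : i ∈ I
    · obtain ⟨s, hs⟩ :=
        LongRay.exists_ge_of_unbounded ((continuous_apply i).comp hcont) (hcof i hi) x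
      exact ⟨s, fun _ => hs⟩
    · exact ⟨x, fun h => absurd h hi⟩
  have hc (j : Fin n) : ∃ c x, j ∉ I → ∀ s, x ≤ s → h s j = c := by
    by_cases hj : j ∈ I
    · exact ⟨rayZero, rayZero, fun h => absurd hj h⟩
    · obtain ⟨c, x, hx⟩ := LongRay.eventually_const ((continuous_apply j).comp hcont) (hbd j hj)
      exact ⟨c, x, fun _ => hx⟩
  choose s hs using hs
  choose c b hc using hc
  choose u hcu hu using fun j => LongRay.exists_seq_right (c j)
  obtain ⟨β, hβ⟩ := LongRay.exists_gt_of_countable (Set.countable_range b)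
  by_contra! hcon
  have hz (x : LongRay) (k : ℕ) : ∃ z : Fin n → LongRay,
      ((∀ i ∈ I, x ≤ z i) ∧ ∀ j ∉ I, z j ∈ Set.Ioo (c j) (u j k)) ∧ z ∉ U :=
    Set.not_subset.1 (hcon x c (fun j => u j k) fun j _ => hcu j k)
  choose z hz hzU using hz
  have hg (x : LongRay) : ∃ y, (∀ k i, z x k i ≤ y) ∧ (∀ i, s x i ≤ y) ∧ ∀ i, h (s x i) i ≤ y := by
    obtain ⟨α, hα⟩ := LongRay.exists_gt_of_countable
      (((Set.countable_range fun p : ℕ × Fin n => z x p.1 p.2).union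
        (Set.countable_range (s x))).union (Set.countable_range fun i => h (s x i) i))
    exact ⟨_, fun k i => (hα _ (Or.inl (Or.inl ⟨(k, i), rfl⟩))).le,
      fun i => (hα _ (Or.inl (Or.inr ⟨i, rfl⟩))).le, fun i => (hα _ (Or.inr ⟨i, rfl⟩)).le⟩
  choose g hgz hgs hgh using hg
  obtain ⟨t, x, hbt, -, hx, hw⟩ := LongRay.exists_interleaving (LongRay.mk β ⟨0, by simp⟩) g
  have hlim : Filter.Tendsto (fun m => z (x m) m) Filter.atTop (nhds (h t)) := by
    refine tendsto_pi_nhds.2 fun i => ?_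
    by_cases hi : i ∈ I
    · have hst : Filter.Tendsto (fun m => s (x m) i) Filter.atTop (nhds t) :=
        hw _ fun m => ⟨(hs _ i hi).1, (hgs _ i).trans (hx m)⟩
      have hht : Filter.Tendsto (fun m => h (s (x m) i) i) Filter.atTop (nhds t) :=
        hw _ fun m => ⟨(hs _ i hi).2, (hgh _ i).trans (hx m)⟩
      have hti : h t i = t :=
        tendsto_nhds_unique ((((continuous_apply i).comp hcont).tendsto t).comp hst) hht
      rw [hti]
      exact hw _ fun m => ⟨(hz _ m).1 i hi, (hgz _ m i).trans (hx m)⟩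
    · rw [hc i hi t ((hβ _ ⟨i, rfl⟩).le.trans hbt)]
      exact hu i _ fun m => (hz _ m).2 i hi
  obtain ⟨m, hm⟩ := (hlim.eventually (hU.mem_nhds (him ⟨t, rfl⟩))).exists
  exact hzU _ _ hm
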